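/- Let M be an acyclic matching on the graph G(C•) of the chain complex C•. Then the map f is a morphism of complexes: ∂^M ∘ f = f ∘ ∂ in every homological degree. -/

import Mathlib

/-!
Algebraic Discrete Morse theory (Jöllenbeck–Welker).

Setup: `R` is a (possibly noncommutative) ring and `C` is a chain complex of free
left `R`-modules `C i = X i → R` with fixed finite basis `X i` in homological
degree `i`; the differential is `∂ i (c) = ∑ c', d i c c' • c'` (we record only the
matrix of coefficients `d`).  `M` is a matching on the associated weighted directed
graph, `MStep` describes the edges of the modified graph `G_M`, `MPath` the directed
paths, `Gamma v w` the sum of the weights of all paths from `v` to `w`, `Crit` the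
critical basis elements, `DMmap` the Morse differential, and `fmap`, `gmap`, `chimap`
the comparison maps and the homotopy.
-/

attribute [local instance] Classical.propDecidable

noncomputable section

section ADMT

variable {R : Type} [Ring R]
variable (X : ℕ → Type) [∀ i, Fintype (X i)]
variable (d : ∀ i, X (i + 1) → X i → R)
variable (M : ∀ i, Set (X (i + 1) × X i))

/-- The family of coefficients `d` of the differentials satisfies `∂ ∘ ∂ = 0`,
i.e. `C` is a chain complex. -/
def IsComplexAux : Prop :=
  ∀ (i : ℕ) (c : X (i + 2)) (c'' : X i),
    ∑ c' : X (i + 1), d (i + 1) c c' * d i c' c'' = 0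

/-- The edges of the modified graph `G_M`: downward steps along non-matched edges
of the graph `G(C)` (weight `d i c c'`), and upward reversed steps along matched
edges (weight `-(d i c c')⁻¹`). -/
inductive MStep : (Σ i, X i) → (Σ i, X i) → Prop
  | down (i : ℕ) (c : X (i + 1)) (c' : X i) (hne : d i c c' ≠ 0)
      (hnm : (c, c') ∉ M i) : MStep ⟨i + 1, c⟩ ⟨i, c'⟩
  | up (i : ℕ) (c : X (i + 1)) (c' : X i) (hmem : (c, c') ∈ M i) :
      MStep ⟨i, c'⟩ ⟨i + 1, c⟩

/-- `M` is an acyclic matching: all edges of `M` are edges of the graph `G(C)`,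
every vertex lies in at most one edge of `M`, the weights of matched edges are
central units of `R`, and the modified graph `G_M` has no directed cycle. -/
def IsAcyclicMatching : Prop :=
  (∀ (i : ℕ) (c : X (i + 1)) (c' : X i), (c, c') ∈ M i → d i c c' ≠ 0) ∧
  (∀ (i : ℕ) (c : X (i + 1)) (c₁ c₂ : X i), (c, c₁) ∈ M i → (c, c₂) ∈ M i → c₁ = c₂) ∧
  (∀ (i : ℕ) (c₁ c₂ : X (i + 1)) (c' : X i), (c₁, c') ∈ M i → (c₂, c') ∈ M i → c₁ = c₂) ∧
  (∀ (i : ℕ) (a : X (i + 2)) (b : X (i + 1)) (c : X i),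
      (a, b) ∈ M (i + 1) → (b, c) ∈ M i → False) ∧
  (∀ (i : ℕ) (c : X (i + 1)) (c' : X i), (c, c') ∈ M i →
      d i c c' ∈ Set.center R ∧ IsUnit (d i c c')) ∧
  (∀ v : Σ i, X i, ¬ Relation.TransGen (MStep X d M) v v)

/-- Directed paths in the modified graph `G_M`. -/
inductive MPath : (Σ i, X i) → (Σ i, X i) → Type
  | nil (v : Σ i, X i) : MPath v v
  | down (i : ℕ) (c : X (i + 1)) (c' : X i) (hne : d i c c' ≠ 0)
      (hnm : (c, c') ∉ M i) (w : Σ i, X i) (p : MPath ⟨i, c'⟩ w) :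
      MPath ⟨i + 1, c⟩ w
  | up (i : ℕ) (c : X (i + 1)) (c' : X i) (hmem : (c, c') ∈ M i)
      (w : Σ i, X i) (p : MPath ⟨i + 1, c⟩ w) : MPath ⟨i, c'⟩ w

/-- The weight of a path: the product of the weights of its edges.  A non-matched
edge `c → c'` has weight `d i c c'`; a reversed matched edge has weight
`-(d i c c')⁻¹`. -/
def MPath.weight : ∀ {v w : Σ i, X i}, MPath X d M v w → R
  | _, _, .nil _ => 1
  | _, _, .down i c c' _ _ _ p => d i c c' * MPath.weight p
  | _, _, .up i c c' _ _ p => -(Ring.inverse (d i c c')) * MPath.weight p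

/-- The first step of the path decreases the homological degree. -/
def MPath.firstDown : ∀ {v w : Σ i, X i}, MPath X d M v w → Prop
  | _, _, .nil _ => False
  | _, _, .down _ _ _ _ _ _ _ => True
  | _, _, .up _ _ _ _ _ _ => False

/-- The first step of the path increases the homological degree. -/
def MPath.firstUp : ∀ {v w : Σ i, X i}, MPath X d M v w → Prop
  | _, _, .nil _ => False
  | _, _, .down _ _ _ _ _ _ _ => False
  | _, _, .up _ _ _ _ _ _ => True

/-- `Γ(v,w)`: the sum of the weights of all directed paths from `v` to `w` in `G_M`
(under the acyclicity hypothesis there are only finitely many such paths). -/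
def Gamma (v w : Σ i, X i) : R := ∑ᶠ p : MPath X d M v w, MPath.weight X d M p

/-- `Γ↓(v,w)`: the sum of the weights of all paths from `v` to `w` whose first step
decreases the homological degree. -/
def GammaDown (v w : Σ i, X i) : R :=
  ∑ᶠ (p : MPath X d M v w) (_ : MPath.firstDown X d M p), MPath.weight X d M p

/-- `Γ↑(v,w)`: the sum of the weights of all paths from `v` to `w` whose first step
increases the homological degree. -/
def GammaUp (v w : Σ i, X i) : R :=
  ∑ᶠ (p : MPath X d M v w) (_ : MPath.firstUp X d M p), MPath.weight X d M p

/-- A basis element is critical if it lies in no edge of `M`. -/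
def CriticalV (v : Σ i, X i) : Prop :=
  ∀ (j : ℕ) (a : X (j + 1)) (b : X j), (a, b) ∈ M j →
    v ≠ ⟨j + 1, a⟩ ∧ v ≠ ⟨j, b⟩

/-- The critical basis elements of homological degree `i`. -/
abbrev Crit (i : ℕ) := {c : X i // CriticalV X M ⟨i, c⟩}

/-- The `R`-linear map between free left `R`-modules determined by a matrix of
coefficients. -/
def liftMap {α β : Type} [Fintype α] (w : α → β → R) :
    (α → R) →ₗ[R] (β → R) where
  toFun v b := ∑ a, v a * w a b
  map_add' u v := by
    funext b
    simp [add_mul, Finset.sum_add_distrib]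
  map_smul' r v := by
    funext b
    simp [Finset.mul_sum, mul_assoc]

/-- The differential `∂` of the original complex `C`. -/
def Dmap (i : ℕ) : (X (i + 1) → R) →ₗ[R] (X i → R) :=
  liftMap (fun c c' => d i c c')

/-- The Morse differential `∂^M (c) = ∑ Γ(c,c') • c'` on the critical cells. -/
def DMmap (i : ℕ) : (Crit X M (i + 1) → R) →ₗ[R] (Crit X M i → R) :=
  liftMap (fun c c' => Gamma X d M ⟨i + 1, c.1⟩ ⟨i, c'.1⟩)

/-- The comparison map `f : C → C^M`, `f(c) = ∑ Γ(c,c') • c'`. -/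
def fmap (i : ℕ) : (X i → R) →ₗ[R] (Crit X M i → R) :=
  liftMap (fun c c' => Gamma X d M ⟨i, c⟩ ⟨i, c'.1⟩)

/-- The comparison map `g : C^M → C`, `g(c) = ∑ Γ(c,c') • c'`. -/
def gmap (i : ℕ) : (Crit X M i → R) →ₗ[R] (X i → R) :=
  liftMap (fun c c' => Gamma X d M ⟨i, c.1⟩ ⟨i, c'⟩)

/-- The homotopy `χ : C_i → C_{i+1}`, `χ(c) = ∑ Γ(c,c') • c'`. -/
def chimap (i : ℕ) : (X i → R) →ₗ[R] (X (i + 1) → R) :=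
  liftMap (fun c c' => Gamma X d M ⟨i, c⟩ ⟨i + 1, c'⟩)

/-- Matched-up vertices. -/
def UpM (v : Σ i, X i) : Prop := ∃ a : X (v.1 + 1), (a, v.2) ∈ M v.1

theorem no_path {w : Σ i, X i} (hM : IsAcyclicMatching X d M) (hw : CriticalV X M w)
    {v : Σ i, X i} (p : MPath X d M v w) :
    v = w ∨ w.1 < v.1 ∨ (UpM X M v ∧ w.1 ≤ v.1) := by
  induction p with
  | nil v => exact Or.inl rfl
  | down i c c' hne hnm w p ih =>
    right; left
    rcases ih hw with h | h | h
    · subst h; simp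
    · simp at h ⊢; omega
    · have := h.2; simp at this ⊢; omega
  | up i c c' hmem w p ih =>
    right; right
    rcases ih hw with h | h | h
    · subst h; exact absurd rfl (hw i c c' hmem).1
    · exact ⟨⟨c, hmem⟩, by simp at h ⊢; omega⟩
    · obtain ⟨⟨a, ha⟩, -⟩ := h
      exact (hM.2.2.2.1 i a c c' ha hmem).elim

/-- Reachability relation, reversed. -/
def PathRel (a b : Σ i, X i) : Prop := Relation.TransGen (MStep X d M) b a

theorem rel_wf (hM : IsAcyclicMatching X d M) : WellFounded (PathRel X d M) := by
  constructor
  intro v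
  let S : ℕ → Set (Σ i, X i) := fun N => {u | u.1 ≤ N ∧ (u.1 = N → ¬ UpM X M u)}
  have hcl : ∀ N u y, u ∈ S N → MStep X d M u y → y ∈ S N := by
    rintro N u y ⟨h1, h2⟩ hs
    cases hs with
    | down i c c' hne hnm =>
      simp at h1
      exact ⟨by simp; omega, fun h => by simp at h; omega⟩
    | up i c c' hmem =>
      simp at h1
      have : i ≠ N := fun h => h2 h ⟨c, hmem⟩
      refine ⟨by simp; omega, fun _ => ?_⟩
      rintro ⟨a, ha⟩
      exact hM.2.2.2.1 i a c c' ha hmem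
  have hcl' : ∀ N u y, u ∈ S N → Relation.TransGen (MStep X d M) u y → y ∈ S N := by
    intro N u y hu h
    induction h with
    | single h => exact hcl N _ _ hu h
    | tail _ h ih => exact hcl N _ _ ih h
  have hfin : ∀ N, Finite (S N) := by
    intro N
    let e : S N → (Σ i : Fin (N + 1), X i) :=
      fun u => ⟨⟨u.1.1, Nat.lt_succ_of_le u.2.1⟩, u.1.2⟩
    refine Finite.of_injective e ?_
    rintro ⟨⟨i, a⟩, ha⟩ ⟨⟨j, b⟩, hb⟩ h
    simp only [e, Sigma.mk.injEq, Fin.mk.injEq] at h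
    obtain ⟨h1, h2⟩ := h
    subst h1
    simp at h2
    subst h2
    rfl
  have key : ∀ N, ∀ u : S N, Acc (PathRel X d M) u.1 := by
    intro N
    have := hfin N
    let r : S N → S N → Prop := fun a b => PathRel X d M a.1 b.1
    have : IsTrans (S N) r := ⟨fun a b c hab hbc => Relation.TransGen.trans hbc hab⟩
    have : Std.Irrefl r := ⟨fun a h => hM.2.2.2.2.2 _ h⟩
    have wf : WellFounded r := Finite.wellFounded_of_trans_of_irrefl r
    intro u
    induction u using wf.induction with
    | h u ih =>
      exact Acc.intro _ fun y hy => ih ⟨y, hcl' N _ _ u.2 hy⟩ hy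
  exact key (v.1 + 1) ⟨v, by simp, fun h => by simp at h⟩

theorem finite_path (hM : IsAcyclicMatching X d M) (v w : Σ i, X i) :
    Finite (MPath X d M v w) := by
  induction v using (rel_wf X d M hM).induction with
  | h v ih =>
  have hnil : Set.Finite {p : MPath X d M v w | ∃ h : v = w, p = h ▸ MPath.nil v} := by
    apply Set.Subsingleton.finite
    rintro p ⟨h, rfl⟩ q ⟨h', rfl⟩
    rfl
  obtain ⟨n, c⟩ := v
  have hup : Set.Finite (⋃ a : X (n + 1), ⋃ h : (a, c) ∈ M n,
      Set.range (MPath.up (d := d) n a c h w)) := by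
    refine Set.finite_iUnion fun a => Set.finite_iUnion fun h => ?_
    have := ih ⟨n + 1, a⟩ (Relation.TransGen.single (MStep.up n a c h))
    exact Set.finite_range _
  rw [← Set.finite_univ_iff]
  cases n with
  | zero =>
    refine (hnil.union hup).subset ?_
    intro p _
    cases p with
    | nil => left; exact ⟨rfl, rfl⟩
    | up _ a _ h _ p => right; simp only [Set.mem_iUnion]; exact ⟨a, h, p, rfl⟩
  | succ n =>
    have hdown : Set.Finite (⋃ x : X n, ⋃ h1 : d n c x ≠ 0, ⋃ h : (c, x) ∉ M n,
        Set.range (MPath.down (d := d) n c x h1 h w)) := by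
      refine Set.finite_iUnion fun x => Set.finite_iUnion fun h1 => Set.finite_iUnion fun h => ?_
      have := ih ⟨n, x⟩ (Relation.TransGen.single (MStep.down n c x h1 h))
      exact Set.finite_range _
    refine ((hnil.union hup).union hdown).subset ?_
    intro p _
    cases p with
    | nil => left; left; exact ⟨rfl, rfl⟩
    | up _ a _ h _ p => left; right; simp only [Set.mem_iUnion]; exact ⟨a, h, p, rfl⟩
    | down _ _ x h1 h _ p => right; simp only [Set.mem_iUnion]; exact ⟨x, h1, h, p, rfl⟩

theorem Gamma_zero (hM : IsAcyclicMatching X d M) {v w : Σ i, X i} (hw : CriticalV X M w)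
    (hvw : v ≠ w) (hle : v.1 ≤ w.1) (hu : ¬ UpM X M v) : Gamma X d M v w = 0 := by
  have : IsEmpty (MPath X d M v w) := ⟨fun p => by
    rcases no_path X d M hM hw p with h | h | h
    · exact hvw h
    · omega
    · exact hu h.1⟩
  exact finsum_of_isEmpty _

theorem Gamma_self (hM : IsAcyclicMatching X d M) (v : Σ i, X i) :
    Gamma X d M v v = 1 := by
  have hp : ∀ {a b : Σ i, X i}, MPath X d M a b → Relation.ReflTransGen (MStep X d M) a b := by
    intro a b p
    induction p with
    | nil v => exact .refl
    | down i c c' hne hnm w p ih => exact .head (MStep.down i c c' hne hnm) ih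
    | up i c c' hmem w p ih => exact .head (MStep.up i c c' hmem) ih
  have : ∀ p : MPath X d M v v, p = MPath.nil v := by
    intro p
    cases p with
    | nil => rfl
    | down i c c' hne hnm w p =>
      exact (hM.2.2.2.2.2 _ (.head' (MStep.down i c c' hne hnm) (hp p))).elim
    | up i c c' hmem w p =>
      exact (hM.2.2.2.2.2 _ (.head' (MStep.up i c c' hmem) (hp p))).elim
  let : Unique (MPath X d M v v) := ⟨⟨MPath.nil v⟩, this⟩
  rw [Gamma, finsum_unique]
  rfl

/-- Recurrence at a vertex with an up step, towards a critical vertex of the same degree. -/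
theorem Gamma_up (hM : IsAcyclicMatching X d M) {n : ℕ} {a : X (n + 1)} {c w : X n}
    (h : (a, c) ∈ M n) (hw : CriticalV X M ⟨n, w⟩) :
    Gamma X d M ⟨n, c⟩ ⟨n, w⟩ =
      -(Ring.inverse (d n a c)) * Gamma X d M ⟨n + 1, a⟩ ⟨n, w⟩ := by
  have hf := finite_path X d M hM ⟨n + 1, a⟩ ⟨n, w⟩
  rw [Gamma, Gamma, mul_finsum' _ _ (Set.toFinite _)]
  symm
  refine finsum_eq_of_bijective (MPath.up (d := d) n a c h ⟨n, w⟩) ⟨?_, ?_⟩ (fun p => rfl)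
  · intro p q hpq
    cases hpq
    rfl
  · intro p
    cases p with
    | nil => exact absurd rfl (hw n a c h).2
    | up _ a' _ h' _ p =>
      obtain rfl := hM.2.2.1 n _ _ _ h h'
      exact ⟨p, rfl⟩
    | down m _ x h1 h2 _ p =>
      exfalso
      rcases no_path X d M hM hw p with h | h | h
      · have := congrArg Sigma.fst h; simp at this
      · simp at h
      · have := h.2; simp at this

/-- Recurrence at a vertex with no up step. -/
theorem Gamma_down (hM : IsAcyclicMatching X d M) {n : ℕ} {c : X (n + 1)} {w : Σ i, X i}
    (hc : ¬ UpM X M ⟨n + 1, c⟩) (hcw : (⟨n + 1, c⟩ : Σ i, X i) ≠ w) :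
    Gamma X d M ⟨n + 1, c⟩ w =
      ∑ x : X n, (if (c, x) ∈ M n then 0 else d n c x * Gamma X d M ⟨n, x⟩ w) := by
  let T := {x : X n // d n c x ≠ 0 ∧ (c, x) ∉ M n}
  have hf := fun v => finite_path X d M hM v w
  let : ∀ v, Fintype (MPath X d M v w) := fun v => Fintype.ofFinite _
  have h1 : Gamma X d M ⟨n + 1, c⟩ w =
      ∑ᶠ q : (Σ x : T, MPath X d M ⟨n, x.1⟩ w), d n c q.1.1 * MPath.weight X d M q.2 := by
    rw [Gamma]
    symm
    refine finsum_eq_of_bijective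
      (fun q => MPath.down (d := d) n c q.1.1 q.1.2.1 q.1.2.2 w q.2) ⟨?_, ?_⟩ (fun p => rfl)
    · rintro ⟨⟨x, hx⟩, p⟩ ⟨⟨y, hy⟩, q⟩ hpq
      simp only [MPath.down.injEq] at hpq
      obtain ⟨hxy, h⟩ := hpq
      subst hxy
      simp at h
      subst h
      rfl
    · intro p
      cases p with
      | nil => exact absurd rfl hcw
      | up _ a _ h _ p => exact (hc ⟨a, h⟩).elim
      | down _ _ x h1 h2 _ p => exact ⟨⟨⟨x, h1, h2⟩, p⟩, rfl⟩
  rw [h1, finsum_eq_sum_of_fintype, Fintype.sum_sigma]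
  have h2 : ∀ x : T, ∑ p : MPath X d M ⟨n, x.1⟩ w, d n c x.1 * MPath.weight X d M p =
      if (c, x.1) ∈ M n then 0 else d n c x.1 * Gamma X d M ⟨n, x.1⟩ w := by
    intro x
    rw [if_neg x.2.2, Gamma, finsum_eq_sum_of_fintype, Finset.mul_sum]
  rw [Finset.sum_congr rfl (fun x _ => h2 x)]
  rw [← Finset.sum_subtype (Finset.univ.filter fun x : X n => d n c x ≠ 0 ∧ (c, x) ∉ M n)
    (by simp) (fun x => if (c, x) ∈ M n then 0 else d n c x * Gamma X d M ⟨n, x⟩ w)]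
  refine Finset.sum_subset (Finset.subset_univ _) fun x _ hx => ?_
  split_ifs with h
  · rfl
  · have h0 : d n c x = 0 := by
      by_contra h0
      exact hx (by simp [h0, h])
    rw [h0, zero_mul]

theorem main_id (hC : IsComplexAux X d) (hM : IsAcyclicMatching X d M) (i : ℕ)
    (w : Crit X M i) (v : Σ i, X i) : ∀ c : X (i + 1), v = ⟨i + 1, c⟩ →
    ∑ c' : Crit X M (i + 1), Gamma X d M ⟨i + 1, c⟩ ⟨i + 1, c'.1⟩ *
        Gamma X d M ⟨i + 1, c'.1⟩ ⟨i, w.1⟩ =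
      ∑ x : X i, d i c x * Gamma X d M ⟨i, x⟩ ⟨i, w.1⟩ := by
  induction v using (rel_wf X d M hM).induction with
  | h v ih =>
  rintro c rfl
  have hneq : ∀ c : X (i + 1), (⟨i + 1, c⟩ : Σ i, X i) ≠ ⟨i, w.1⟩ := by
    intro c h
    have := congrArg Sigma.fst h
    simp at this
  by_cases hup : UpM X M ⟨i + 1, c⟩
  · obtain ⟨a, ha⟩ := hup
    change X (i + 2) at a
    change (a, c) ∈ M (i + 1) at ha
    obtain ⟨hcen, hunit⟩ := hM.2.2.2.2.1 _ _ _ ha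
    have hau : ¬ UpM X M ⟨i + 1 + 1, a⟩ := by
      rintro ⟨b, hb⟩
      exact hM.2.2.2.1 _ b a c hb ha
    have hmem : ∀ x, (a, x) ∈ M (i + 1) ↔ x = c := by
      intro x
      constructor
      · intro h; exact hM.2.1 _ _ _ _ h ha
      · rintro rfl; exact ha
    have hexp : ∀ c' : Crit X M (i + 1), Gamma X d M ⟨i + 1, c⟩ ⟨i + 1, c'.1⟩ =
        -(Ring.inverse (d (i + 1) a c)) * ∑ x : X (i + 1), (if x = c then 0 else
          d (i + 1) a x * Gamma X d M ⟨i + 1, x⟩ ⟨i + 1, c'.1⟩) := by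
      intro c'
      rw [Gamma_up X d M hM ha c'.2, Gamma_down X d M hM hau (by
        intro h; have := congrArg Sigma.fst h; simp at this)]
      simp only [hmem]
    have hC' : ∑ x : X (i + 1), d (i + 1) a x *
        ∑ y : X i, d i x y * Gamma X d M ⟨i, y⟩ ⟨i, w.1⟩ = 0 := by
      simp only [Finset.mul_sum]
      rw [Finset.sum_comm]
      simp only [← mul_assoc, ← Finset.sum_mul, hC i a, zero_mul, Finset.sum_const_zero]
    rw [← Finset.add_sum_erase _ _ (Finset.mem_univ c)] at hC'
    have hL : ∑ x : X (i + 1), (if x = c then 0 else d (i + 1) a x *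
        ∑ c' : Crit X M (i + 1), Gamma X d M ⟨i + 1, x⟩ ⟨i + 1, c'.1⟩ *
          Gamma X d M ⟨i + 1, c'.1⟩ ⟨i, w.1⟩) =
        ∑ x ∈ Finset.univ.erase c, d (i + 1) a x *
        ∑ y : X i, d i x y * Gamma X d M ⟨i, y⟩ ⟨i, w.1⟩ := by
      rw [← Finset.add_sum_erase _ _ (Finset.mem_univ c), if_pos rfl, zero_add]
      refine Finset.sum_congr rfl fun x hx => ?_
      have hxc : x ≠ c := Finset.ne_of_mem_erase hx
      rw [if_neg hxc]
      by_cases h0 : d (i + 1) a x = 0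
      · rw [h0, zero_mul, zero_mul]
      · rw [ih ⟨i + 1, x⟩ ((Relation.TransGen.single (MStep.up _ _ _ ha)).tail
          (MStep.down _ _ _ h0 (fun h => hxc ((hmem x).1 h)))) x rfl]
    calc _ = -(Ring.inverse (d (i + 1) a c)) * ∑ x : X (i + 1), (if x = c then 0 else
          d (i + 1) a x * ∑ c' : Crit X M (i + 1), Gamma X d M ⟨i + 1, x⟩ ⟨i + 1, c'.1⟩ *
          Gamma X d M ⟨i + 1, c'.1⟩ ⟨i, w.1⟩) := by
          simp only [hexp, mul_assoc, ← Finset.mul_sum]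
          congr 1
          simp only [Finset.sum_mul]
          rw [Finset.sum_comm]
          refine Finset.sum_congr rfl fun x _ => ?_
          split_ifs
          · simp
          · simp only [Finset.mul_sum, mul_assoc]
      _ = _ := by
          rw [hL, eq_neg_of_add_eq_zero_right hC', neg_mul_neg, ← mul_assoc,
            Ring.inverse_mul_cancel _ hunit, one_mul]
  · have hz : ∀ c' : Crit X M (i + 1), c'.1 ≠ c →
        Gamma X d M ⟨i + 1, c⟩ ⟨i + 1, c'.1⟩ = 0 := by
      intro c' hc'
      refine Gamma_zero X d M hM c'.2 ?_ le_rfl hup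
      intro h
      simp at h
      exact hc' h.symm
    by_cases hdn : ∃ b, (c, b) ∈ M i
    · obtain ⟨b, hb⟩ := hdn
      obtain ⟨hcen, hunit⟩ := hM.2.2.2.2.1 _ _ _ hb
      have hmem : ∀ x, (c, x) ∈ M i ↔ x = b := by
        intro x
        constructor
        · intro h; exact hM.2.1 _ _ _ _ h hb
        · rintro rfl; exact hb
      rw [Finset.sum_eq_zero]
      · rw [← Finset.add_sum_erase _ _ (Finset.mem_univ b), Gamma_up X d M hM hb w.2,
          Gamma_down X d M hM hup (hneq c), ← mul_assoc, mul_neg,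
          Ring.mul_inverse_cancel _ hunit]
        rw [← Finset.add_sum_erase _ (fun x => if (c, x) ∈ M i then _ else _)
          (Finset.mem_univ b), if_pos hb, zero_add, neg_one_mul, eq_comm, neg_add_eq_zero]
        refine Finset.sum_congr rfl fun x hx => ?_
        rw [if_neg fun h => Finset.ne_of_mem_erase hx ((hmem x).1 h)]
      · intro c' _
        rw [hz, zero_mul]
        intro h
        exact (c'.2 i c b hb).1 (by rw [h])
    · have hcrit : CriticalV X M ⟨i + 1, c⟩ := by
        intro j a b hab
        constructor
        · intro h
          have h1 := congrArg Sigma.fst h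
          simp at h1
          subst h1
          simp at h
          subst h
          exact hdn ⟨b, hab⟩
        · intro h
          have h1 := congrArg Sigma.fst h
          simp at h1
          subst h1
          simp at h
          subst h
          exact hup ⟨a, hab⟩
      rw [Finset.sum_eq_single (⟨c, hcrit⟩ : Crit X M (i + 1))]
      · rw [Gamma_self X d M hM, one_mul, Gamma_down X d M hM hup (hneq c)]
        refine Finset.sum_congr rfl fun x hx => ?_
        rw [if_neg fun h => hdn ⟨x, h⟩]
      · intro c' _ hne
        rw [hz c' (fun h => hne (Subtype.ext h)), zero_mul]
      · simp

/-- Lemma B.2 (C1).  If `M` is an acyclic matching on the graph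
`G(C)` of the chain complex `C`, then `f` is a morphism of complexes:
`∂^M ∘ f = f ∘ ∂` in every homological degree. -/
theorem fmap_chain_map
    (hC : IsComplexAux X d) (hM : IsAcyclicMatching X d M) :
    ∀ i, DMmap X d M i ∘ₗ fmap X d M (i + 1) = fmap X d M i ∘ₗ Dmap X d i := by
  intro i
  refine LinearMap.ext fun v => funext fun w => ?_
  simp only [LinearMap.comp_apply, DMmap, fmap, Dmap, liftMap, LinearMap.coe_mk, AddHom.coe_mk,
    Finset.sum_mul]
  rw [Finset.sum_comm, Finset.sum_comm (γ := X i)]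
  refine Finset.sum_congr rfl fun c _ => ?_
  simp only [mul_assoc, ← Finset.mul_sum]
  rw [main_id X d M hC hM i w _ c rfl]

end ADMT

end
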